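/- arXiv:2504.08043 — 11 statements merged into one kernel-verified Lean document; each statement's English description precedes it below -/
import Mathlib

section
/- Let D ≥ 2, let q_1 < q_2 < ⋯ < q_L be pairwise coprime positive integers with q_1 > 1, and let σ_1, …, σ_d (1 ≤ d ≤ D) be permutations of {1,…,D} whose last values σ_1(D), …, σ_d(D) are pairwise distinct. Then the d·L matrices M(q_i, σ_j), for 1 ≤ i ≤ L and 1 ≤ j ≤ d, are pairwise left coprime: any two distinct matrices in this family are left coprime. -/
/-- The `D × D` integer matrix `M(q, σ)`: diagonal entries all `q`, entry
`(σ(k), σ(k+1))` equal to `1` for `k = 1, …, D-1`, all other entries `0`. -/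
def Mmat {D : ℕ} (q : ℤ) (σ : Equiv.Perm (Fin D)) : Matrix (Fin D) (Fin D) ℤ :=
  Matrix.diagonal (fun _ => q) +
    ∑ k : Fin (D - 1),
      Matrix.single (σ ⟨(k : ℕ), by have := k.isLt; omega⟩)
        (σ ⟨(k : ℕ) + 1, by have := k.isLt; omega⟩) (1 : ℤ)

/-- Two square integer matrices are left coprime if every common left divisor of
them is unimodular. -/
def LeftCoprime {D : ℕ} (M N : Matrix (Fin D) (Fin D) ℤ) : Prop :=
  ∀ A : Matrix (Fin D) (Fin D) ℤ, A.det ≠ 0 →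
    (∃ B, M = A * B) → (∃ C, N = A * C) → (A.det = 1 ∨ A.det = -1)

/-- `A` is a right multiple of `M` if `A = M * P` for some nonsingular integer
matrix `P`. -/
def IsRightMultiple {D : ℕ} (A M : Matrix (Fin D) (Fin D) ℤ) : Prop :=
  ∃ P : Matrix (Fin D) (Fin D) ℤ, P.det ≠ 0 ∧ A = M * P

theorem Mmat_apply {D : ℕ} (q : ℤ) (σ : Equiv.Perm (Fin D)) (a b : Fin D) :
    Mmat q σ (σ a) (σ b) =
      (if a = b then q else 0) + if (a : ℕ) + 1 = b then 1 else 0 := by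
  simp only [Mmat, Matrix.add_apply, Matrix.diagonal_apply, Matrix.sum_apply,
    Matrix.single_apply, EmbeddingLike.apply_eq_iff_eq]
  congr 1
  by_cases h : (a : ℕ) + 1 = b
  · rw [if_pos h, Finset.sum_eq_single ⟨a, by omega⟩]
    · rw [if_pos]
      exact ⟨rfl, Fin.ext h⟩
    · intro k _ hk
      rw [if_neg]
      rintro ⟨rfl, -⟩
      exact hk rfl
    · simp
  · rw [if_neg h]
    refine Finset.sum_eq_zero fun k _ => if_neg ?_
    rintro ⟨rfl, rfl⟩
    exact h rfl

section

variable {R : Type*} [CommRing R] {D : ℕ} (q : ℤ) (σ : Equiv.Perm (Fin D)) (v : Fin D → R)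

theorem vecMul_Mmat_apply (b : Fin D) :
    Matrix.vecMul v ((Mmat q σ).map (Int.cast : ℤ → R)) (σ b) =
      q * v (σ b) + ∑ a : Fin D, if (a : ℕ) + 1 = b then v (σ a) else 0 := by
  simp only [Matrix.vecMul, dotProduct, Matrix.map_apply]
  rw [← Equiv.sum_comp σ]
  simp [Mmat_apply, add_mul, Finset.sum_add_distrib, mul_comm]

theorem vecMul_Mmat_apply_succ (a b : Fin D) (hab : (a : ℕ) + 1 = b) :
    Matrix.vecMul v ((Mmat q σ).map (Int.cast : ℤ → R)) (σ b) = q * v (σ b) + v (σ a) := by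
  rw [vecMul_Mmat_apply, Finset.sum_eq_single a, if_pos hab]
  · intro c _ hc
    rw [if_neg]
    intro h
    exact hc (Fin.ext (by omega))
  · simp

variable {q σ v}

/-- If `q` vanishes in `R`, a left null vector of `M(q, σ)` is supported at the last value of
`σ`. -/
theorem eq_zero_of_vecMul_Mmat_of_cast_eq_zero (hq : (q : R) = 0)
    (hv : Matrix.vecMul v ((Mmat q σ).map (Int.cast : ℤ → R)) = 0)
    (a : Fin D) (ha : (a : ℕ) ≠ D - 1) : v (σ a) = 0 := by
  have h := vecMul_Mmat_apply_succ q σ v a ⟨a + 1, by omega⟩ rfl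
  simpa [hv, hq] using h.symm

/-- If `q` is nonzero in a domain `R`, then `M(q, σ)` has no nonzero left null vector over `R`. -/
theorem eq_zero_of_vecMul_Mmat_of_cast_ne_zero [IsDomain R] (hq : (q : R) ≠ 0)
    (hv : Matrix.vecMul v ((Mmat q σ).map (Int.cast : ℤ → R)) = 0) : v = 0 := by
  have key : ∀ (n : ℕ) (hn : n < D), v (σ ⟨n, hn⟩) = 0 := by
    intro n
    induction n with
    | zero =>
      intro hn
      have h := vecMul_Mmat_apply q σ v ⟨0, hn⟩
      simpa [hv, hq] using h.symm
    | succ n ih =>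
      intro hn
      have h := vecMul_Mmat_apply_succ q σ v ⟨n, by omega⟩ ⟨n + 1, hn⟩ rfl
      simpa [hv, hq, ih] using h.symm
  funext x
  obtain ⟨a, rfl⟩ := σ.surjective x
  exact key a a.isLt

end

/-- Two matrices with no common nonzero left null vector modulo any prime are left coprime. -/
theorem leftCoprime_of_forall_prime {D : ℕ} {M N : Matrix (Fin D) (Fin D) ℤ}
    (h : ∀ (p : ℕ) [Fact p.Prime] (v : Fin D → ZMod p),
      Matrix.vecMul v (M.map (Int.cast : ℤ → ZMod p)) = 0 →
      Matrix.vecMul v (N.map (Int.cast : ℤ → ZMod p)) = 0 → v = 0) :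
    LeftCoprime M N := by
  rintro A - ⟨B, rfl⟩ ⟨C, rfl⟩
  rw [← Int.natAbs_eq_natAbs_iff, Int.natAbs_one]
  by_contra hA
  obtain ⟨p, hp, hpA⟩ := Nat.exists_prime_and_dvd hA
  have : Fact p.Prime := ⟨hp⟩
  have hdet : (A.map (Int.castRingHom (ZMod p))).det = 0 := by
    rw [← RingHom.mapMatrix_apply, ← RingHom.map_det, eq_intCast,
      ZMod.intCast_zmod_eq_zero_iff_dvd]
    exact Int.natCast_dvd.mpr hpA
  obtain ⟨v, hv, hvA⟩ := Matrix.exists_vecMul_eq_zero_iff.mpr hdet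
  have hmul (B : Matrix (Fin D) (Fin D) ℤ) :
      Matrix.vecMul v ((A * B).map (Int.castRingHom (ZMod p))) = 0 := by
    rw [Matrix.map_mul, ← Matrix.vecMul_vecMul, hvA, Matrix.zero_vecMul]
  exact hv (h p v (hmul B) (hmul C))

/-- for pairwise coprime positive integers `q_1 < ⋯ < q_L` with
`q_1 > 1` and permutations `σ_1, …, σ_d` (`1 ≤ d ≤ D`) with pairwise distinct
last values, the `d·L` matrices `M(q_i, σ_j)` are pairwise left coprime. -/
theorem stmt_1 (D L d : ℕ) (hD : 2 ≤ D) (hL : 1 ≤ L) (hd1 : 1 ≤ d) (hdD : d ≤ D)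
    (q : Fin L → ℤ) (hmono : StrictMono q) (hpos : ∀ i, 0 < q i)
    (hq1 : 1 < q ⟨0, hL⟩)
    (hcop : ∀ i i' : Fin L, i ≠ i' → IsCoprime (q i) (q i'))
    (σ : Fin d → Equiv.Perm (Fin D))
    (hlast : ∀ j j' : Fin d, j ≠ j' →
      σ j ⟨D - 1, by omega⟩ ≠ σ j' ⟨D - 1, by omega⟩) :
    ∀ (i i' : Fin L) (j j' : Fin d), (i, j) ≠ (i', j') →
      LeftCoprime (Mmat (q i) (σ j)) (Mmat (q i') (σ j')) := by
  intro i i' j j' hne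
  refine leftCoprime_of_forall_prime fun p _ v hM hN => ?_
  by_cases hqi : (q i : ZMod p) = 0
  swap
  · exact eq_zero_of_vecMul_Mmat_of_cast_ne_zero hqi hM
  by_cases hqi' : (q i' : ZMod p) = 0
  swap
  · exact eq_zero_of_vecMul_Mmat_of_cast_ne_zero hqi' hN
  have hii : i = i' := by
    by_contra hii
    have h := (hcop i i' hii).map (Int.castRingHom (ZMod p))
    simp [hqi, hqi'] at h
  have hjj : j ≠ j' := fun hjj => hne (Prod.ext hii hjj)
  funext x
  obtain ⟨a, rfl⟩ := (σ j).surjective x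
  by_cases ha : (a : ℕ) = D - 1
  · obtain ⟨b, hb⟩ := (σ j').surjective (σ j a)
    rw [← hb]
    refine eq_zero_of_vecMul_Mmat_of_cast_eq_zero hqi' hN b fun hbD => hlast j j' hjj ?_
    rw [← Fin.ext (b := ⟨D - 1, by omega⟩) ha, ← hb]
    exact congrArg (σ j') (Fin.ext (hbD.trans ha.symm))
  · exact eq_zero_of_vecMul_Mmat_of_cast_eq_zero hqi hM a ha
end

section
/- Let D ≥ 2, let q and q' be coprime integers with q > 1 and q' > 1 and q ≠ q', and let σ be a permutation of {1,…,D}. Then the matrices M(q, σ) and M(q', σ) are left coprime. -/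
/-- Relabelling rows and columns by `σ` makes `Mmat q σ` upper triangular with diagonal `q`. -/
theorem det_Mmat {D : ℕ} (q : ℤ) (σ : Equiv.Perm (Fin D)) : (Mmat q σ).det = q ^ D := by
  rw [← Matrix.det_submatrix_equiv_self σ, Matrix.det_of_isUpperTriangular]
  · have h_diag (i : Fin D) : (Mmat q σ).submatrix σ σ i i = q := by
      simp only [Mmat, Matrix.submatrix_apply, Matrix.add_apply, Matrix.diagonal_apply_eq,
        Matrix.sum_apply, add_eq_left]
      refine Finset.sum_eq_zero fun k _ => Matrix.single_apply_of_ne _ _ _ _ _ ?_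
      simp only [σ.injective.eq_iff, Fin.ext_iff]
      omega
    simp only [h_diag, Finset.prod_const, Finset.card_univ, Fintype.card_fin]
  · intro i j hji
    have hlt : (j : ℕ) < i := hji
    have hne : σ i ≠ σ j := fun h => by simp [σ.injective h] at hlt
    simp only [Mmat, Matrix.submatrix_apply, Matrix.add_apply, Matrix.diagonal_apply_ne _ hne,
      Matrix.sum_apply, zero_add]
    refine Finset.sum_eq_zero fun k _ => Matrix.single_apply_of_ne _ _ _ _ _ ?_
    simp only [σ.injective.eq_iff, Fin.ext_iff]
    omega

/-- for coprime `q, q' > 1` with `q ≠ q'` and any permutation `σ`,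
the matrices `M(q, σ)` and `M(q', σ)` are left coprime. -/
theorem stmt_2 (D : ℕ) (hD : 2 ≤ D) (q q' : ℤ) (hq : 1 < q) (hq' : 1 < q')
    (hne : q ≠ q') (hcop : IsCoprime q q') (σ : Equiv.Perm (Fin D)) :
    LeftCoprime (Mmat q σ) (Mmat q' σ) := by
  rintro A - ⟨B, hB⟩ ⟨C, hC⟩
  have h_dvd : A.det ∣ q ^ D := ⟨B.det, by rw [← Matrix.det_mul, ← hB, det_Mmat]⟩
  have h_dvd' : A.det ∣ q' ^ D := ⟨C.det, by rw [← Matrix.det_mul, ← hC, det_Mmat]⟩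
  exact Int.isUnit_iff.mp (hcop.pow.isUnit_of_dvd' h_dvd h_dvd')
end

section
/- Let D ≥ 2, let q and q' be integers with q > 1 and q' > 1 (not necessarily distinct or coprime), and let σ and σ' be permutations of {1,…,D} whose last values differ, i.e., σ(D) ≠ σ'(D). Then the matrices M(q, σ) and M(q', σ') are left coprime. -/
/-- Column `σ j` of a left product with `M(q, σ)`. -/
theorem vecMul_Mmat_apply_s3 {D : ℕ} {K : Type*} [CommRing K] (q : ℤ) (σ : Equiv.Perm (Fin D))
    (v : Fin D → K) (j : Fin D) :
    Matrix.vecMul v ((Mmat q σ).map (Int.castRingHom K)) (σ j) =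
      v (σ j) * q +
        ∑ k : Fin (D - 1), if (k : ℕ) + 1 = j then v (σ ⟨k, by have := k.isLt; omega⟩) else 0 := by
  simp only [Matrix.vecMul, dotProduct, Mmat, Matrix.map_apply, Matrix.add_apply,
    Matrix.sum_apply, Matrix.diagonal_apply, Matrix.single_apply, map_add, map_sum, mul_add,
    Finset.sum_add_distrib, Finset.mul_sum]
  congr 1
  · simp
  · rw [Finset.sum_comm]
    refine Finset.sum_congr rfl fun k _ => ?_
    simp [ite_and, Fin.ext_iff (b := j)]

/-- Over a field, a vector in the left kernel of `M(q, σ)` is supported on the last value of `σ`. -/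
theorem apply_eq_zero_of_vecMul_Mmat_eq_zero {D : ℕ} {K : Type*} [Field K] (q : ℤ)
    (σ : Equiv.Perm (Fin D)) (v : Fin D → K)
    (hv : Matrix.vecMul v ((Mmat q σ).map (Int.castRingHom K)) = 0)
    (j : Fin D) (hj : (j : ℕ) + 1 < D) : v (σ j) = 0 := by
  have hcol (i : Fin D) := (vecMul_Mmat_apply_s3 q σ v i).symm.trans (congrFun hv (σ i))
  have hsucc (n : ℕ) (hn : n + 1 < D) :
      v (σ ⟨n + 1, hn⟩) * q + v (σ ⟨n, by omega⟩) = 0 := by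
    have h := hcol ⟨n + 1, hn⟩
    rw [Finset.sum_eq_single (⟨n, by omega⟩ : Fin (D - 1))] at h
    · simpa using h
    · intro b _ hb
      rw [if_neg]
      simpa [Fin.ext_iff] using hb
    · simp
  obtain ⟨j, hjD⟩ := j
  by_cases hq : (q : K) = 0
  · simpa [hq] using hsucc j hj
  · clear hj
    induction j with
    | zero => simpa [hq] using hcol ⟨0, hjD⟩
    | succ n ih =>
      have h := hsucc n hjD
      rw [ih (by omega) hsucc, add_zero] at h
      exact (mul_eq_zero.1 h).resolve_right hq

/-- for any `q, q' > 1` and permutations `σ, σ'` with different last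
values `σ(D) ≠ σ'(D)`, the matrices `M(q, σ)` and `M(q', σ')` are left coprime. -/
theorem stmt_3 (D : ℕ) (hD : 2 ≤ D) (q q' : ℤ) (hq : 1 < q) (hq' : 1 < q')
    (σ σ' : Equiv.Perm (Fin D))
    (hlast : σ ⟨D - 1, by omega⟩ ≠ σ' ⟨D - 1, by omega⟩) :
    LeftCoprime (Mmat q σ) (Mmat q' σ') := by
  rintro A - ⟨B, hB⟩ ⟨C, hC⟩
  rw [← Int.isUnit_iff, Int.isUnit_iff_natAbs_eq]
  by_contra hA
  obtain ⟨p, hp, hpA⟩ := Nat.exists_prime_and_dvd hA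
  have : Fact p.Prime := ⟨hp⟩
  have hdet : (A.map (Int.castRingHom (ZMod p))).det = 0 := by
    rw [← RingHom.mapMatrix_apply, ← RingHom.map_det]
    exact (ZMod.intCast_zmod_eq_zero_iff_dvd _ _).2 (Int.natCast_dvd.2 hpA)
  obtain ⟨v, hv0, hv⟩ := Matrix.exists_vecMul_eq_zero_iff.2 hdet
  have hker (N : Matrix (Fin D) (Fin D) ℤ) :
      Matrix.vecMul v ((A * N).map (Int.castRingHom (ZMod p))) = 0 := by
    rw [Matrix.map_mul, ← Matrix.vecMul_vecMul, hv, Matrix.zero_vecMul]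
  have hsupp (r : ℤ) (τ : Equiv.Perm (Fin D)) (N) (hN : Mmat r τ = A * N) (i : Fin D)
      (hi : i ≠ τ ⟨D - 1, by omega⟩) : v i = 0 := by
    have h := apply_eq_zero_of_vecMul_Mmat_eq_zero r τ v (hN ▸ hker N) (τ.symm i)
    rw [Equiv.apply_symm_apply] at h
    refine h ?_
    have hne : τ.symm i ≠ ⟨D - 1, by omega⟩ := fun e => hi (by rw [← e, τ.apply_symm_apply])
    rw [ne_eq, Fin.ext_iff] at hne
    have := (τ.symm i).isLt
    simp only at hne
    omega
  refine hv0 (funext fun i => ?_)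
  by_cases hi : i = σ ⟨D - 1, by omega⟩
  · exact hsupp q' σ' C hC i (hi ▸ hlast)
  · exact hsupp q σ B hB i hi
end

section
/- Let D ≥ 2, let q_1 < q_2 < ⋯ < q_L be pairwise coprime positive integers with q_1 > 1, and let σ_1, …, σ_d (1 ≤ d ≤ D) be permutations of {1,…,D} whose last values σ_1(D), …, σ_d(D) are pairwise distinct. For each pair (i,j) with 1 ≤ i ≤ L and 1 ≤ j ≤ d, let ε_{i,j} : {1,…,D}×{1,…,D} → {+1, −1} be an arbitrary sign pattern, and let M'_{i,j} be the D×D integer matrix whose (a,b) entry equals ε_{i,j}(a,b) times the (a,b) entry of M(q_i, σ_j). Then the matrices M'_{i,j}, for 1 ≤ i ≤ L and 1 ≤ j ≤ d, are pairwise left coprime. -/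
theorem Mmat_apply_perm {D : ℕ} (q : ℤ) (σ : Equiv.Perm (Fin D)) (x y : Fin D) :
    Mmat q σ (σ x) (σ y) =
      (if x = y then q else 0) + if (x : ℕ) + 1 = y then 1 else 0 := by
  unfold Mmat
  rw [Matrix.add_apply, Matrix.diagonal_apply, Matrix.sum_apply]
  simp only [σ.injective.eq_iff, Matrix.single_apply]
  congr 1
  split_ifs with h
  · rw [Finset.sum_eq_single ⟨(x : ℕ), by omega⟩]
    · simp [h]
    · intro k _ hk
      simp only [ne_eq, Fin.ext_iff] at hk
      simp [Fin.ext_iff, hk]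
    · simp
  · refine Finset.sum_eq_zero fun k _ => if_neg ?_
    rintro ⟨rfl, rfl⟩
    exact h rfl

/-- `M` is obtained from `M(q, σ)` by changing signs of entries. -/
def IsSigning {D : ℕ} (q : ℤ) (σ : Equiv.Perm (Fin D)) (M : Matrix (Fin D) (Fin D) ℤ) : Prop :=
  ∀ a b, M a b = Mmat q σ a b ∨ M a b = -Mmat q σ a b

namespace IsSigning

variable {D : ℕ} {q : ℤ} {σ : Equiv.Perm (Fin D)} {M : Matrix (Fin D) (Fin D) ℤ}
  {K : Type*} [Field K] {v : Fin D → K}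

theorem apply_eq_zero_of_cast_eq_zero (hM : IsSigning q σ M)
    (hv : Matrix.vecMul v (M.map (Int.cast : ℤ → K)) = 0) (hq : (q : K) = 0)
    {x : Fin D} (hx : (x : ℕ) + 1 < D) : v (σ x) = 0 := by
  have h := congrFun hv (σ ⟨x + 1, hx⟩)
  rw [Matrix.vecMul, dotProduct, ← Equiv.sum_comp σ, Finset.sum_eq_single x] at h
  · rcases hM (σ x) (σ ⟨x + 1, hx⟩) with h' | h' <;>
      simpa [h', Mmat_apply_perm, Fin.ext_iff] using h
  · intro z _ hz
    have hz' : (z : ℕ) ≠ x := fun e => hz (Fin.ext e)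
    rcases hM (σ z) (σ ⟨x + 1, hx⟩) with h' | h' <;>
      simp [h', Mmat_apply_perm, hz', apply_ite (Int.cast : ℤ → K), hq]
  · simp

theorem eq_zero_of_cast_ne_zero (hM : IsSigning q σ M)
    (hv : Matrix.vecMul v (M.map (Int.cast : ℤ → K)) = 0) (hq : (q : K) ≠ 0) : v = 0 := by
  suffices H : ∀ n : ℕ, ∀ x : Fin D, (x : ℕ) = n → v (σ x) = 0 by
    funext a
    simpa using H _ (σ.symm a) rfl
  intro n
  induction n using Nat.strong_induction_on with
  | _ n ih =>
    rintro x rfl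
    have h := congrFun hv (σ x)
    rw [Matrix.vecMul, dotProduct, ← Equiv.sum_comp σ, Finset.sum_eq_single x] at h
    · rcases hM (σ x) (σ x) with h' | h' <;>
        simpa [h', Mmat_apply_perm, hq] using h
    · intro z _ hz
      by_cases hzx : (z : ℕ) + 1 = x
      · simp [ih z (by omega) z rfl]
      · rcases hM (σ z) (σ x) with h' | h' <;> simp [h', Mmat_apply_perm, hz, hzx]
    · simp

end IsSigning

/-- changing the signs of arbitrary entries of the matrices
`M(q_i, σ_j)` preserves pairwise left coprimality. -/
theorem stmt_4 (D L d : ℕ) (hD : 2 ≤ D) (hL : 1 ≤ L) (hd1 : 1 ≤ d) (hdD : d ≤ D)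
    (q : Fin L → ℤ) (hmono : StrictMono q) (hpos : ∀ i, 0 < q i)
    (hq1 : 1 < q ⟨0, hL⟩)
    (hcop : ∀ i i' : Fin L, i ≠ i' → IsCoprime (q i) (q i'))
    (σ : Fin d → Equiv.Perm (Fin D))
    (hlast : ∀ j j' : Fin d, j ≠ j' →
      σ j ⟨D - 1, by omega⟩ ≠ σ j' ⟨D - 1, by omega⟩)
    (ε : Fin L → Fin d → Fin D → Fin D → ℤ)
    (hε : ∀ i j a b, ε i j a b = 1 ∨ ε i j a b = -1)
    (M' : Fin L → Fin d → Matrix (Fin D) (Fin D) ℤ)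
    (hM' : ∀ i j a b, M' i j a b = ε i j a b * Mmat (q i) (σ j) a b) :
    ∀ (i i' : Fin L) (j j' : Fin d), (i, j) ≠ (i', j') →
      LeftCoprime (M' i j) (M' i' j') := by
  have hsign (i j) : IsSigning (q i) (σ j) (M' i j) := fun a b => by
    rcases hε i j a b with h | h <;> simp [hM', h]
  intro i i' j j' hne
  refine leftCoprime_of_forall_prime fun p _ v hv hv' => ?_
  by_cases hq : (q i : ZMod p) = 0
  swap
  · exact (hsign i j).eq_zero_of_cast_ne_zero hv hq
  by_cases hq' : (q i' : ZMod p) = 0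
  swap
  · exact (hsign i' j').eq_zero_of_cast_ne_zero hv' hq'
  have hi : i = i' := by
    by_contra hi
    have := (hcop i i' hi).map (Int.castRingHom (ZMod p))
    simp [hq, hq'] at this
  have hj : j ≠ j' := fun hj => hne (by rw [hi, hj])
  have hsupp {i j} {a : Fin D} (h : Matrix.vecMul v ((M' i j).map Int.cast) = 0)
      (hq : (q i : ZMod p) = 0) (ha : a ≠ σ j ⟨D - 1, by omega⟩) : v a = 0 := by
    have hx : ((σ j).symm a : ℕ) ≠ D - 1 := fun e =>
      ha ((σ j).symm_apply_eq.1 (Fin.ext e))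
    simpa using (hsign i j).apply_eq_zero_of_cast_eq_zero h hq
      (x := (σ j).symm a) (by omega)
  funext a
  by_cases ha : a = σ j ⟨D - 1, by omega⟩
  · exact hsupp hv' hq' (ha ▸ hlast j j' hj)
  · exact hsupp hv hq ha
end

section
/- Let D ≥ 1, let q and q' be coprime integers with q > 1, q' > 1 and q ≠ q', and let σ and σ' be arbitrary permutations of {1,…,D}. Then M(q, σ) and M(q', σ') are left coprime. -/
/-- for coprime `q, q' > 1` with `q ≠ q'` and arbitrary permutations
`σ, σ'`, the matrices `M(q, σ)` and `M(q', σ')` are left coprime. -/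
theorem stmt_7 (D : ℕ) (hD : 1 ≤ D) (q q' : ℤ) (hq : 1 < q) (hq' : 1 < q')
    (hne : q ≠ q') (hcop : IsCoprime q q') (σ σ' : Equiv.Perm (Fin D)) :
    LeftCoprime (Mmat q σ) (Mmat q' σ') := by
  rintro A - ⟨B, hB⟩ ⟨C, hC⟩
  have hdvd : A.det ∣ q ^ D := ⟨B.det, by rw [← det_Mmat q σ, hB, Matrix.det_mul]⟩
  have hdvd' : A.det ∣ q' ^ D := ⟨C.det, by rw [← det_Mmat q' σ', hC, Matrix.det_mul]⟩
  exact Int.isUnit_iff.mp (hcop.pow.isUnit_of_dvd' hdvd hdvd')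
end

section
/- Let q be an integer with q > 1, and set M1 = [[q, 0], [1, q]], M2 = [[q, 1], [0, q]], and L_q = [[−q⁴−q², q³], [−q³, q²]] (2×2 integer matrices). Then det L_q = −q⁴, L_q is a common right multiple of M1 and M2 (i.e., there exist nonsingular 2×2 integer matrices P1 and P2 with L_q = M1·P1 = M2·P2), and L_q is a least common right multiple of M1 and M2: every nonsingular 2×2 integer matrix that is a common right multiple of M1 and M2 is a right multiple of L_q. -/
/-- for `q > 1`, `L_q = [[-q⁴-q², q³], [-q³, q²]]` has determinant
`-q⁴`, is a common right multiple of `M1 = [[q,0],[1,q]]` and `M2 = [[q,1],[0,q]]`,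
and is a least common right multiple of them. -/
theorem stmt_9 (q : ℤ) (hq : 1 < q) :
    (!![-q ^ 4 - q ^ 2, q ^ 3; -q ^ 3, q ^ 2]).det = -q ^ 4 ∧
    IsRightMultiple !![-q ^ 4 - q ^ 2, q ^ 3; -q ^ 3, q ^ 2] !![q, 0; 1, q] ∧
    IsRightMultiple !![-q ^ 4 - q ^ 2, q ^ 3; -q ^ 3, q ^ 2] !![q, 1; 0, q] ∧
    ∀ R : Matrix (Fin 2) (Fin 2) ℤ, R.det ≠ 0 →
      IsRightMultiple R !![q, 0; 1, q] → IsRightMultiple R !![q, 1; 0, q] →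
      IsRightMultiple R !![-q ^ 4 - q ^ 2, q ^ 3; -q ^ 3, q ^ 2] := by
  have hq0 : q ≠ 0 := by omega
  refine ⟨by rw [Matrix.det_fin_two_of]; ring,
    ⟨!![-q ^ 3 - q, q ^ 2; 1, 0], ?_, ?_⟩, ⟨!![-q ^ 3, q ^ 2 - 1; -q ^ 2, q], ?_, ?_⟩, ?_⟩
  · simp [Matrix.det_fin_two_of, hq0]
  · ext i j; fin_cases i <;> fin_cases j <;> simp [Matrix.mul_apply, Fin.sum_univ_two] <;> ring
  · have hdet : (!![-q ^ 3, q ^ 2 - 1; -q ^ 2, q]).det = -q ^ 2 := by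
      rw [Matrix.det_fin_two_of]; ring
    rw [hdet]
    exact neg_ne_zero.mpr (pow_ne_zero 2 hq0)
  · ext i j; fin_cases i <;> fin_cases j <;> simp [Matrix.mul_apply, Fin.sum_univ_two] <;> ring
  · rintro R hR ⟨A, -, hA⟩ ⟨C, -, hC⟩
    have top : ∀ j, R 0 j = q * A 0 j ∧ R 0 j = q * C 0 j + C 1 j := fun j =>
      ⟨by simp [hA, Matrix.vecMul_eq_sum, Fin.sum_univ_two],
        by simp [hC, Matrix.vecMul_eq_sum, Fin.sum_univ_two]⟩
    have bottom : ∀ j, R 1 j = A 0 j + q * A 1 j ∧ R 1 j = q * C 1 j := fun j =>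
      ⟨by simp [hA, Matrix.vecMul_eq_sum, Fin.sum_univ_two],
        by simp [hC, Matrix.vecMul_eq_sum, Fin.sum_univ_two]⟩
    -- The quotient `L_q⁻¹ * R`, written in terms of the two given cofactors.
    have key : R = !![-q ^ 4 - q ^ 2, q ^ 3; -q ^ 3, q ^ 2] *
        Matrix.of ![A 1, fun j => q ^ 2 * A 0 j - (q ^ 2 + 1) * C 0 j] := by
      ext i j
      obtain ⟨h₁, h₂⟩ := top j
      obtain ⟨h₃, h₄⟩ := bottom j
      have hC1 : C 1 j = q * A 0 j - q * C 0 j := by linarith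
      have hA0 : A 0 j = q * C 1 j - q * A 1 j := by linarith
      fin_cases i <;> simp [Matrix.mul_apply, Fin.sum_univ_two]
      · rw [h₁]
        linear_combination (q ^ 4 + q ^ 2) * hC1 + (q ^ 3 + q) * hA0
      · rw [h₄]
        linear_combination (q ^ 3 + q) * hC1 + q ^ 2 * hA0
    refine ⟨_, fun h0 => hR ?_, key⟩
    rw [key, Matrix.det_mul, h0, mul_zero]
end

section
/- Let q be an integer with q > 1. Every nonsingular 2×2 integer matrix R that is a common right multiple of M1 = [[q, 0], [1, q]] and M2 = [[q, 1], [0, q]] satisfies q⁴ ∣ det R; in particular |det R| ≥ q⁴. -/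
/-- A common right multiple of `[[q, 0], [1, q]]` and `[[q, 1], [0, q]]` is divisible by `q ^ 2`. -/
theorem exists_eq_sq_smul_of_isRightMultiple {q : ℤ} {R : Matrix (Fin 2) (Fin 2) ℤ}
    (h1 : IsRightMultiple R !![q, 0; 1, q]) (h2 : IsRightMultiple R !![q, 1; 0, q]) :
    ∃ S : Matrix (Fin 2) (Fin 2) ℤ, R = q ^ 2 • S := by
  obtain ⟨P, -, hP⟩ := h1
  obtain ⟨Q, -, hQ⟩ := h2
  have upper (j : Fin 2) : R 0 j = q * P 0 j ∧ R 0 j = q * Q 0 j + Q 1 j :=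
    ⟨by rw [hP, Matrix.mul_apply]; simp, by rw [hQ, Matrix.mul_apply]; simp⟩
  have lower (j : Fin 2) : R 1 j = P 0 j + q * P 1 j ∧ R 1 j = q * Q 1 j :=
    ⟨by rw [hP, Matrix.mul_apply]; simp, by rw [hQ, Matrix.mul_apply]; simp⟩
  refine ⟨Matrix.of ![fun j => Q 1 j - P 1 j, fun j => P 0 j - Q 0 j], ?_⟩
  ext i j
  obtain ⟨u1, u2⟩ := upper j
  obtain ⟨l1, l2⟩ := lower j
  fin_cases i
  · simp
    linear_combination u1 + q * (l2 - l1)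
  · simp
    linear_combination l2 + q * (u1 - u2)

/-- every nonsingular common right multiple `R` of
`M1 = [[q,0],[1,q]]` and `M2 = [[q,1],[0,q]]` satisfies `q⁴ ∣ det R`, and in
particular `|det R| ≥ q⁴`. -/
theorem stmt_10 (q : ℤ) (hq : 1 < q) (R : Matrix (Fin 2) (Fin 2) ℤ)
    (hR : R.det ≠ 0)
    (h1 : IsRightMultiple R !![q, 0; 1, q])
    (h2 : IsRightMultiple R !![q, 1; 0, q]) :
    q ^ 4 ∣ R.det ∧ q ^ 4 ≤ |R.det| := by
  obtain ⟨S, rfl⟩ := exists_eq_sq_smul_of_isRightMultiple h1 h2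
  have hdvd : q ^ 4 ∣ (q ^ 2 • S).det := ⟨S.det, by
    rw [Matrix.det_smul, Fintype.card_fin]
    ring⟩
  exact ⟨hdvd, Int.le_of_dvd (abs_pos.mpr hR) ((dvd_abs _ _).mpr hdvd)⟩
end

section
/- Let q_1 < q_2 < ⋯ < q_L be pairwise coprime positive integers with q_1 > 1. Every nonsingular 2×2 integer matrix R that is a common right multiple of all 2L matrices M_{i,1} = [[q_i, 0], [1, q_i]] and M_{i,2} = [[q_i, 1], [0, q_i]], 1 ≤ i ≤ L, satisfies (q_1·q_2⋯q_L)⁴ ∣ det R; in particular |det R| ≥ (q_1·q_2⋯q_L)⁴. -/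
/-- A common right multiple of `[[q, 0], [1, q]]` and `[[q, 1], [0, q]]` has all its entries
divisible by `q ^ 2`. -/
theorem sq_dvd_entry_of_isRightMultiple {q : ℤ} {R : Matrix (Fin 2) (Fin 2) ℤ}
    (h1 : IsRightMultiple R !![q, 0; 1, q]) (h2 : IsRightMultiple R !![q, 1; 0, q])
    (i j : Fin 2) : q ^ 2 ∣ R i j := by
  obtain ⟨P, -, hP⟩ := h1
  obtain ⟨S, -, hS⟩ := h2
  have hP0 : R 0 j = q * P 0 j := by simp [hP, Matrix.vecMul_eq_sum]
  have hP1 : R 1 j = P 0 j + q * P 1 j := by simp [hP, Matrix.vecMul_eq_sum]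
  have hS0 : R 0 j = q * S 0 j + S 1 j := by simp [hS, Matrix.vecMul_eq_sum]
  have hS1 : R 1 j = q * S 1 j := by simp [hS, Matrix.vecMul_eq_sum]
  fin_cases i
  · refine ⟨q * (P 0 j - S 0 j) - P 1 j, ?_⟩
    change R 0 j = _
    linear_combination hP0 + q * (hS1 - hP1) + q ^ 2 * (hP0 - hS0)
  · refine ⟨P 0 j - S 0 j, ?_⟩
    change R 1 j = _
    linear_combination hS1 + q * (hP0 - hS0)

/-- A common right multiple of `[[q, 0], [1, q]]` and `[[q, 1], [0, q]]` has determinant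
divisible by `q ^ 4`. -/
theorem pow_four_dvd_det_of_isRightMultiple {q : ℤ} {R : Matrix (Fin 2) (Fin 2) ℤ}
    (h1 : IsRightMultiple R !![q, 0; 1, q]) (h2 : IsRightMultiple R !![q, 1; 0, q]) :
    q ^ 4 ∣ R.det := by
  have h := sq_dvd_entry_of_isRightMultiple h1 h2
  rw [Matrix.det_fin_two, show q ^ 4 = q ^ 2 * q ^ 2 by ring]
  exact dvd_sub (mul_dvd_mul (h 0 0) (h 1 1)) (mul_dvd_mul (h 0 1) (h 1 0))

/-- every nonsingular common right multiple `R` of all `2L` matrices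
`M_{i,1} = [[q_i,0],[1,q_i]]` and `M_{i,2} = [[q_i,1],[0,q_i]]` satisfies
`(q_1⋯q_L)⁴ ∣ det R`, and in particular `|det R| ≥ (q_1⋯q_L)⁴`. -/
theorem stmt_11 (L : ℕ) (hL : 1 ≤ L) (q : Fin L → ℤ) (hmono : StrictMono q)
    (hpos : ∀ i, 0 < q i) (hq1 : 1 < q ⟨0, hL⟩)
    (hcop : ∀ i i' : Fin L, i ≠ i' → IsCoprime (q i) (q i'))
    (R : Matrix (Fin 2) (Fin 2) ℤ) (hR : R.det ≠ 0)
    (h1 : ∀ i : Fin L, IsRightMultiple R !![q i, 0; 1, q i])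
    (h2 : ∀ i : Fin L, IsRightMultiple R !![q i, 1; 0, q i]) :
    (∏ i, q i) ^ 4 ∣ R.det ∧ (∏ i, q i) ^ 4 ≤ |R.det| := by
  have hdvd : (∏ i, q i) ^ 4 ∣ R.det := by
    rw [← Finset.prod_pow]
    exact Fintype.prod_dvd_of_coprime (fun i j hij => (hcop i j hij).pow)
      fun i => pow_four_dvd_det_of_isRightMultiple (h1 i) (h2 i)
  exact ⟨hdvd, Int.le_of_dvd (abs_pos.mpr hR) ((dvd_abs _ _).mpr hdvd)⟩
end

section
/- Let q_1 < q_2 < ⋯ < q_L be pairwise coprime positive integers with q_1 > 1, and let R_2 = (q_1·q_2⋯q_L)² · I be the 2×2 scalar integer matrix with diagonal entries (q_1·q_2⋯q_L)². Then R_2 is a least common right multiple of the 2L matrices M_{i,1} = [[q_i, 0], [1, q_i]] and M_{i,2} = [[q_i, 1], [0, q_i]], 1 ≤ i ≤ L: R_2 is a common right multiple of all of them, and every nonsingular 2×2 integer matrix that is a common right multiple of all of them is a right multiple of R_2. -/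
/-- If `R` is a common right multiple of `[[a, 0], [1, a]]` and `[[a, 1], [0, a]]`, then `a ^ 2`
divides every entry of `R`. -/
theorem sq_dvd_apply_of_isRightMultiple {a : ℤ} {R : Matrix (Fin 2) (Fin 2) ℤ}
    (h₁ : IsRightMultiple R !![a, 0; 1, a]) (h₂ : IsRightMultiple R !![a, 1; 0, a])
    (i j : Fin 2) : a ^ 2 ∣ R i j := by
  obtain ⟨P, -, hP⟩ := h₁
  obtain ⟨Q, -, hQ⟩ := h₂
  have hP₀ : R 0 j = a * P 0 j := by rw [hP, Matrix.mul_apply]; simp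
  have hP₁ : R 1 j = P 0 j + a * P 1 j := by rw [hP, Matrix.mul_apply]; simp
  have hQ₀ : R 0 j = a * Q 0 j + Q 1 j := by rw [hQ, Matrix.mul_apply]; simp
  have hQ₁ : R 1 j = a * Q 1 j := by rw [hQ, Matrix.mul_apply]; simp
  match i with
  | 0 => exact ⟨Q 1 j - P 1 j, by linear_combination hP₀ + a * (hQ₁ - hP₁)⟩
  | 1 => exact ⟨P 0 j - Q 0 j, by linear_combination hQ₁ + a * (hP₀ - hQ₀)⟩

/-- A nonsingular matrix all of whose entries are divisible by `c` is a right multiple of the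
scalar matrix `c • 1`. -/
theorem isRightMultiple_smul_one {D : ℕ} {c : ℤ} {R : Matrix (Fin D) (Fin D) ℤ}
    (hR : R.det ≠ 0) (h : ∀ i j, c ∣ R i j) :
    IsRightMultiple R (c • (1 : Matrix (Fin D) (Fin D) ℤ)) := by
  choose P hP using h
  have hRP : R = (c • (1 : Matrix (Fin D) (Fin D) ℤ)) * Matrix.of P := by
    ext i j
    rw [Matrix.smul_mul, one_mul, Matrix.smul_apply, Matrix.of_apply, hP, smul_eq_mul]
  refine ⟨Matrix.of P, fun h0 => hR ?_, hRP⟩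
  rw [hRP, Matrix.det_mul, h0, mul_zero]

/-- For `a ∣ n` with `n ≠ 0`, the scalar matrix `n ^ 2 • 1` is a right multiple of
`[[a, 0], [1, a]]` and of `[[a, 1], [0, a]]`. -/
theorem sq_smul_one_isRightMultiple {a n : ℤ} (hn : n ≠ 0) (h : a ∣ n) :
    IsRightMultiple (n ^ 2 • (1 : Matrix (Fin 2) (Fin 2) ℤ)) !![a, 0; 1, a] ∧
      IsRightMultiple (n ^ 2 • (1 : Matrix (Fin 2) (Fin 2) ℤ)) !![a, 1; 0, a] := by
  obtain ⟨k, rfl⟩ := h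
  have ha : a ≠ 0 := left_ne_zero_of_mul hn
  have hk : k ≠ 0 := right_ne_zero_of_mul hn
  refine ⟨⟨k ^ 2 • !![a, 0; -1, a], ?_, ?_⟩, ⟨k ^ 2 • !![a, -1; 0, a], ?_, ?_⟩⟩
  · simp [Matrix.det_fin_two_of, ha, hk]
  · ext i j
    fin_cases i <;> fin_cases j <;> simp [Matrix.mul_apply] <;> ring
  · simp [Matrix.det_fin_two_of, ha, hk]
  · ext i j
    fin_cases i <;> fin_cases j <;> simp [Matrix.mul_apply] <;> ring

/-- `R_2 = (q_1⋯q_L)² • I` is a least common right multiple of the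
`2L` matrices `M_{i,1} = [[q_i,0],[1,q_i]]` and `M_{i,2} = [[q_i,1],[0,q_i]]`. -/
theorem stmt_12 (L : ℕ) (hL : 1 ≤ L) (q : Fin L → ℤ) (hmono : StrictMono q)
    (hpos : ∀ i, 0 < q i) (hq1 : 1 < q ⟨0, hL⟩)
    (hcop : ∀ i i' : Fin L, i ≠ i' → IsCoprime (q i) (q i')) :
    (∀ i : Fin L,
      IsRightMultiple (((∏ i, q i) ^ 2) • (1 : Matrix (Fin 2) (Fin 2) ℤ))
        !![q i, 0; 1, q i] ∧
      IsRightMultiple (((∏ i, q i) ^ 2) • (1 : Matrix (Fin 2) (Fin 2) ℤ))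
        !![q i, 1; 0, q i]) ∧
    ∀ R : Matrix (Fin 2) (Fin 2) ℤ, R.det ≠ 0 →
      (∀ i : Fin L,
        IsRightMultiple R !![q i, 0; 1, q i] ∧ IsRightMultiple R !![q i, 1; 0, q i]) →
      IsRightMultiple R (((∏ i, q i) ^ 2) • (1 : Matrix (Fin 2) (Fin 2) ℤ)) := by
  refine ⟨fun i => sq_smul_one_isRightMultiple
    (Finset.prod_ne_zero_iff.2 fun i _ => (hpos i).ne')
      (Finset.dvd_prod_of_mem q (Finset.mem_univ i)),
    fun R hR h => isRightMultiple_smul_one hR fun i j => ?_⟩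
  rw [← Finset.prod_pow]
  exact Finset.prod_dvd_of_coprime (fun k _ l _ hkl => (hcop k l hkl).pow)
    fun k _ => sq_dvd_apply_of_isRightMultiple (h k).1 (h k).2 i j
end

section
/- Let D ≥ 2, let q_1 < q_2 < ⋯ < q_L be pairwise coprime positive integers with q_1 > 1, and let σ_1, …, σ_d be arbitrary permutations of {1,…,D}. Then the D×D matrix R_D = (q_1·q_2⋯q_L)^D · I is a common right multiple of every matrix M(q_i, σ_j), 1 ≤ i ≤ L, 1 ≤ j ≤ d: for each i and j there exists a nonsingular D×D integer matrix P with R_D = M(q_i, σ_j)·P. -/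
/-- Reindexed by `σ`, the matrix `M(q, σ)` agrees with `q • I` on and below the diagonal. -/
theorem Mmat_apply_of_le {D : ℕ} (q : ℤ) (σ : Equiv.Perm (Fin D)) {a b : Fin D} (h : b ≤ a) :
    Mmat q σ (σ a) (σ b) = if a = b then q else 0 := by
  rw [Mmat, Matrix.add_apply, Matrix.sum_apply, Finset.sum_eq_zero, add_zero,
    Matrix.diagonal_apply]
  · simp only [EmbeddingLike.apply_eq_iff_eq]
  · intro k _
    rw [Matrix.single_apply, if_neg]
    rintro ⟨ha, hb⟩
    have ha' := congrArg Fin.val (σ.injective ha)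
    have hb' := congrArg Fin.val (σ.injective hb)
    have h' : (b : ℕ) ≤ a := h
    simp only at ha' hb'
    omega

/-- A nonzero multiple of `det M`, as a scalar matrix, is a right multiple of `M`. -/
theorem isRightMultiple_smul_one_s13 {D : ℕ} {M : Matrix (Fin D) (Fin D) ℤ} {r : ℤ} (hr : r ≠ 0)
    (h : M.det ∣ r) : IsRightMultiple (r • (1 : Matrix (Fin D) (Fin D) ℤ)) M := by
  obtain ⟨c, rfl⟩ := h
  have hmul : (M.det * c) • (1 : Matrix (Fin D) (Fin D) ℤ) = M * (c • M.adjugate) := by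
    rw [Matrix.mul_smul, Matrix.mul_adjugate, smul_smul, mul_comm]
  refine ⟨c • M.adjugate, fun h0 => ?_, hmul⟩
  have hdet := congrArg Matrix.det hmul
  rw [Matrix.det_mul, h0, mul_zero, Matrix.det_smul, Matrix.det_one, mul_one] at hdet
  exact pow_ne_zero _ hr hdet

/-- `R_D = (q_1⋯q_L)^D • I` is a common right multiple of every
matrix `M(q_i, σ_j)` for arbitrary permutations `σ_1, …, σ_d`. -/
theorem stmt_13 (D L d : ℕ) (hD : 2 ≤ D) (hL : 1 ≤ L)
    (q : Fin L → ℤ) (hmono : StrictMono q) (hpos : ∀ i, 0 < q i)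
    (hq1 : 1 < q ⟨0, hL⟩)
    (hcop : ∀ i i' : Fin L, i ≠ i' → IsCoprime (q i) (q i'))
    (σ : Fin d → Equiv.Perm (Fin D)) :
    ∀ (i : Fin L) (j : Fin d),
      IsRightMultiple (((∏ i, q i) ^ D) • (1 : Matrix (Fin D) (Fin D) ℤ))
        (Mmat (q i) (σ j)) := by
  intro i j
  refine isRightMultiple_smul_one_s13
    (pow_ne_zero _ (Finset.prod_ne_zero_iff.mpr fun i _ => (hpos i).ne')) ?_
  rw [det_Mmat]
  exact pow_dvd_pow_of_dvd (Finset.dvd_prod_of_mem q (Finset.mem_univ i)) D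
end

section
/- Let D be an integer with 3 ≤ D ≤ 75, let q_1 < q_2 < ⋯ < q_L be pairwise coprime positive integers with q_1 > 1, and for 1 ≤ j ≤ D let σ_j be the cyclic permutation σ_j = (j, j+1, …, D, 1, 2, …, j−1) of {1,…,D}. Then the D×D matrix R_D = (q_1·q_2⋯q_L)^D · I is a least common right multiple of the D·L matrices M(q_i, σ_j), 1 ≤ i ≤ L, 1 ≤ j ≤ D: R_D is a common right multiple of all of them, and every nonsingular D×D integer matrix that is a common right multiple of all of them is a right multiple of R_D. -/
/-- The row `σ k` of `M(q, σ) * P` is `q` times row `σ k` of `P` plus row `σ (k + 1)` of `P`,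
the latter being absent for the last `k`. -/
theorem Mmat_mul_apply {D : ℕ} (q : ℤ) (σ : Equiv.Perm (Fin D)) (P : Matrix (Fin D) (Fin D) ℤ)
    (k c : Fin D) :
    (Mmat q σ * P) (σ k) c =
      q * P (σ k) c + if h : (k : ℕ) + 1 < D then P (σ ⟨k + 1, h⟩) c else 0 := by
  have hentry : ∀ l : Fin (D - 1), (Matrix.single (σ ⟨(l : ℕ), by omega⟩)
      (σ ⟨(l : ℕ) + 1, by omega⟩) (1 : ℤ) * P) (σ k) c =
        if (l : ℕ) = k then P (σ ⟨(l : ℕ) + 1, by omega⟩) c else 0 := by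
    intro l
    by_cases hl : (l : ℕ) = k
    · have hk : k = ⟨(l : ℕ), by omega⟩ := Fin.ext hl.symm
      rw [if_pos hl, hk, Matrix.single_mul_apply_same, one_mul]
    · rw [if_neg hl, Matrix.single_mul_apply_of_ne]
      exact fun h => hl (congrArg Fin.val (σ.injective h)).symm
  rw [Mmat, Matrix.add_mul, Matrix.add_apply, Matrix.diagonal_mul, Finset.sum_mul,
    Matrix.sum_apply, Finset.sum_congr rfl fun l _ => hentry l]
  congr 1
  split_ifs with h
  · rw [Finset.sum_eq_single ⟨(k : ℕ), by omega⟩]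
    · simp
    · intro l _ hl
      exact if_neg fun h' => hl (Fin.ext h')
    · simp
  · exact Finset.sum_eq_zero fun l _ => if_neg (by omega)

/-- A nonsingular product has a nonsingular right factor. -/
theorem IsRightMultiple.of_eq_mul {D : ℕ} {A M P : Matrix (Fin D) (Fin D) ℤ} (hA : A.det ≠ 0)
    (h : A = M * P) : IsRightMultiple A M :=
  ⟨P, fun hP => hA (by rw [h, Matrix.det_mul, hP, mul_zero]), h⟩

/-- If both `x 0, …, x (n - 1)` and `x 1, …, x n` are obtained from sequences vanishing at `n` by
the bidiagonal operator `w ↦ q w m + w (m + 1)`, then `q ^ n` divides `x n`. -/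
theorem pow_dvd_of_bidiagonal {n : ℕ} (hn : 0 < n) {q : ℤ} {x w w' : ℕ → ℤ}
    (hw : ∀ m < n, x m = q * w m + w (m + 1)) (hwn : w n = 0)
    (hw' : ∀ m < n, x (m + 1) = q * w' m + w' (m + 1)) (hwn' : w' n = 0) :
    q ^ n ∣ x n := by
  have hdiff : ∀ m < n, w (m + 1) - w' m = (-q) ^ m * (w 1 - w' 0) := by
    intro m
    induction m with
    | zero => intro _; simp
    | succ m ih =>
      intro hm
      rw [pow_succ]
      linear_combination hw' m (by omega) - hw (m + 1) hm + (-q) * ih (by omega)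
  obtain ⟨n, rfl⟩ := Nat.exists_eq_succ_of_ne_zero hn.ne'
  have hlast := hdiff n (by omega)
  have hx := hw' n (by omega)
  rw [Nat.succ_eq_add_one] at hwn hwn' ⊢
  rw [hwn] at hlast
  rw [hwn'] at hx
  have hpow : x (n + 1) = (-q) ^ (n + 1) * (w 1 - w' 0) := by
    rw [pow_succ]
    linear_combination hx - q * hlast
  rw [hpow]
  exact (pow_dvd_pow_of_dvd (dvd_neg.mpr dvd_rfl) _).mul_right _

/-- A common right multiple of the matrices `M(q, σ_j)`, for `σ_j` the cyclic shifts, has all its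
entries divisible by `q ^ D`. -/
theorem pow_dvd_apply_of_isRightMultiple {D : ℕ} {q : ℤ} {σ : Fin D → Equiv.Perm (Fin D)}
    (hσ : ∀ j k : Fin D, σ j k = j + k) {R : Matrix (Fin D) (Fin D) ℤ}
    (hR : ∀ j, IsRightMultiple R (Mmat q (σ j))) (a c : Fin D) : q ^ D ∣ R a c := by
  have hD : 0 < D := a.pos
  have hsolve : ∀ s : ℕ, ∃ w : ℕ → ℤ,
      (∀ m < D, R ⟨(s + m) % D, Nat.mod_lt _ hD⟩ c = q * w m + w (m + 1)) ∧ w D = 0 := by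
    intro s
    obtain ⟨P, -, hP⟩ := hR ⟨s % D, Nat.mod_lt _ hD⟩
    have hshift : ∀ (m : ℕ) (hm : m < D), σ ⟨s % D, Nat.mod_lt _ hD⟩ ⟨m, hm⟩ =
        ⟨(s + m) % D, Nat.mod_lt _ hD⟩ := by
      intro m hm
      rw [hσ]
      ext
      simp [Fin.val_add]
    refine ⟨fun m => if m < D then P ⟨(s + m) % D, Nat.mod_lt _ hD⟩ c else 0, ?_, by simp⟩
    intro m hm
    rw [← hshift m hm, hP, Mmat_mul_apply]
    simp only [hshift, hm, if_true]
    congr 1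
  obtain ⟨w, hw, hwD⟩ := hsolve a
  obtain ⟨w', hw', hwD'⟩ := hsolve (a + 1)
  have key := pow_dvd_of_bidiagonal (x := fun m => R ⟨(a + m) % D, Nat.mod_lt _ hD⟩ c)
    hD hw hwD (fun m hm => by rw [← hw' m hm]; simp only [add_assoc, add_comm 1 m]) hwD'
  simpa [Nat.mod_eq_of_lt a.isLt] using key

/-- for `3 ≤ D ≤ 75` and the cyclic permutations
`σ_j : k ↦ j + k` of `Fin D`, the matrix `R_D = (q_1⋯q_L)^D • I` is a least
common right multiple of the `D·L` matrices `M(q_i, σ_j)`. -/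
theorem stmt_15 (D L : ℕ) (hD3 : 3 ≤ D) (hD75 : D ≤ 75) (hL : 1 ≤ L)
    (q : Fin L → ℤ) (hmono : StrictMono q) (hpos : ∀ i, 0 < q i)
    (hq1 : 1 < q ⟨0, hL⟩)
    (hcop : ∀ i i' : Fin L, i ≠ i' → IsCoprime (q i) (q i'))
    (σ : Fin D → Equiv.Perm (Fin D)) (hσ : ∀ j k : Fin D, σ j k = j + k) :
    (∀ (i : Fin L) (j : Fin D),
      IsRightMultiple (((∏ i, q i) ^ D) • (1 : Matrix (Fin D) (Fin D) ℤ))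
        (Mmat (q i) (σ j))) ∧
    ∀ R : Matrix (Fin D) (Fin D) ℤ, R.det ≠ 0 →
      (∀ (i : Fin L) (j : Fin D), IsRightMultiple R (Mmat (q i) (σ j))) →
      IsRightMultiple R (((∏ i, q i) ^ D) • (1 : Matrix (Fin D) (Fin D) ℤ)) := by
  have hprod : (∏ i, q i) ^ D ≠ 0 := pow_ne_zero _ (Finset.prod_pos fun i _ => hpos i).ne'
  refine ⟨fun i j => ?_, fun R hR hcrm => ?_⟩
  · obtain ⟨t, ht⟩ : q i ^ D ∣ (∏ i, q i) ^ D :=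
      pow_dvd_pow_of_dvd (Finset.dvd_prod_of_mem q (Finset.mem_univ i)) D
    refine IsRightMultiple.of_eq_mul (P := t • (Mmat (q i) (σ j)).adjugate) ?_ ?_
    · rw [Matrix.det_smul, Matrix.det_one, mul_one]
      exact pow_ne_zero _ hprod
    · rw [Matrix.mul_smul, Matrix.mul_adjugate, det_Mmat, smul_smul, ht, mul_comm]
  · have hdvd : ∀ a c, (∏ i, q i) ^ D ∣ R a c := by
      intro a c
      rw [← Finset.prod_pow]
      exact Finset.prod_dvd_of_coprime (fun i _ i' _ hne => (hcop i i' hne).pow)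
        fun i _ => pow_dvd_apply_of_isRightMultiple hσ (hcrm i) a c
    choose P hP using hdvd
    refine IsRightMultiple.of_eq_mul (P := Matrix.of P) hR ?_
    ext a c
    rw [Matrix.smul_mul, one_mul, Matrix.smul_apply, Matrix.of_apply, smul_eq_mul, hP]
end
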